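/- For every ρ ∈ (0, 4], the function f_ρ is (1+ρ)-smooth: it is differentiable on ℝ and its derivative f_ρ' is Lipschitz continuous with constant 1+ρ. -/

import Mathlib

/-- The piecewise function `f_ρ` from the paper's discussion of the logistic map
embedded in gradient descent with step-size 1. -/
noncomputable def frho (ρ : ℝ) (x : ℝ) : ℝ :=
  if |x| ≤ 1 then
    ρ / 3 * |x| ^ 3 + (1 - ρ) / 2 * x ^ 2 + (ρ - 1) ^ 3 / (6 * ρ ^ 2)
  else if |x| ≤ 3 / 2 then
    -(ρ / 3) * |x| ^ 3 + (1 + 3 * ρ) / 2 * x ^ 2 - 2 * ρ * |x| +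
      ((ρ - 1) ^ 3 + 4 * ρ ^ 3) / (6 * ρ ^ 2)
  else
    1 / 2 * x ^ 2 + ρ / 4 * |x| + (4 * (ρ - 1) ^ 3 - 11 * ρ ^ 3) / (24 * ρ ^ 2)

/-!
Write `f_ρ'' = 1 + ρ ψ`: the function `ψ` is even, continuous and piecewise linear, with values
`-1, 1, 0` at `|x| = 0, 1, 3/2` and `0` beyond, so `|ψ| ≤ 1`. A piecewise linear function is, up to
an affine function (here `0`), a weighted sum of translates of `|·|` to its kinks. Replacing `|·|`
by `|·|³ / 6` in that sum gives a second antiderivative of `ψ`, hence a formula for `f_ρ` without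
case distinctions that can be differentiated twice term by term.
-/

section AbsPow

variable (n : ℕ) (x : ℝ)

lemma hasDerivAt_self_mul_abs_pow : HasDerivAt (fun y => y * |y| ^ n) ((n + 1) * |x| ^ n) x := by
  have off_zero (y : ℝ) (hy : y ≠ 0) :
      HasDerivAt (fun y => y * |y| ^ n) ((n + 1) * |y| ^ n) y := by
    refine ((hasDerivAt_id y).mul ((hasDerivAt_abs hy).pow n)).congr_deriv ?_
    cases n with
    | zero => simp
    | succ n =>
      simp only [id, Pi.pow_apply, Nat.cast_add, Nat.cast_one, Nat.add_sub_cancel]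
      linear_combination (n + 1) * |y| ^ n * self_mul_sign y
  exact hasDerivAt_of_hasDerivAt_of_ne' off_zero (by fun_prop) (by fun_prop) x

lemma hasDerivAt_abs_pow_add_two :
    HasDerivAt (fun y => |y| ^ (n + 2)) ((n + 2) * (x * |x| ^ n)) x := by
  have factor : (fun y : ℝ => |y| ^ (n + 2)) = fun y => y * (y * |y| ^ n) := by
    ext y
    linear_combination |y| ^ n * sq_abs y
  rw [factor]
  refine ((hasDerivAt_id x).mul (hasDerivAt_self_mul_abs_pow n x)).congr_deriv ?_
  simp only [id]
  ring

end AbsPow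

/-- The weighted sum of the translates of `g` to the kinks `0, ±1, ±3/2` of `ψ = (f_ρ'' - 1) / ρ`.
The weights are half the jumps of the slope of `ψ`, since `|·|` has slope jump `2`; thus
`ψ = kinkSum |·|`. -/
noncomputable def kinkSum (g : ℝ → ℝ) (x : ℝ) : ℝ :=
  2 * g x - 2 * (g (x - 1) + g (x + 1)) + (g (x - 3 / 2) + g (x + 3 / 2))

lemma hasDerivAt_kinkSum {g g' : ℝ → ℝ} (hg : ∀ y, HasDerivAt g (g' y) y) (x : ℝ) :
    HasDerivAt (kinkSum g) (kinkSum g' x) x :=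
  (((hg x).const_mul 2).sub
    ((((hg _).comp_sub_const x 1).add ((hg _).comp_add_const x 1)).const_mul 2)).add
    (((hg _).comp_sub_const x (3 / 2)).add ((hg _).comp_add_const x (3 / 2)))

lemma kinkSum_const_mul (c : ℝ) (g : ℝ → ℝ) (x : ℝ) :
    kinkSum (fun y => c * g y) x = c * kinkSum g x := by
  simp only [kinkSum]
  ring

lemma kinkSum_even {g : ℝ → ℝ} (hg : g.Even) : (kinkSum g).Even := by
  intro x
  simp only [kinkSum, hg x, ← hg (x - 1), ← hg (x + 1), ← hg (x - 3 / 2), ← hg (x + 3 / 2)]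
  ring_nf

lemma abs_kinkSum_abs_le_one (x : ℝ) : |kinkSum abs x| ≤ 1 := by
  unfold kinkSum
  grind

section Frho

variable {ρ : ℝ}

lemma frho_eq_kinkSum (hρ : ρ ≠ 0) (x : ℝ) :
    frho ρ x = 1 / 2 * x ^ 2 + ρ / 6 * kinkSum (fun y => |y| ^ 3) x +
      (4 * (ρ - 1) ^ 3 - 11 * ρ ^ 3) / (24 * ρ ^ 2) := by
  have kinkSum_abs : kinkSum (fun y => |y| ^ 3) |x| = kinkSum (fun y => |y| ^ 3) x := by
    have even : (kinkSum fun y => |y| ^ 3).Even := kinkSum_even fun y => by rw [abs_neg]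
    rcases abs_choice x with h | h <;> simp only [h, even x]
  rw [← kinkSum_abs, ← sq_abs x, frho, ← sq_abs x]
  have nonneg := abs_nonneg x
  generalize |x| = t at nonneg
  simp only [kinkSum, abs_of_nonneg nonneg, abs_of_nonneg (add_nonneg nonneg zero_le_one),
    abs_of_nonneg (add_nonneg nonneg (by norm_num : (0 : ℝ) ≤ 3 / 2))]
  split_ifs with inner middle
  · rw [abs_of_nonpos (by linarith : t - 1 ≤ 0), abs_of_nonpos (by linarith : t - 3 / 2 ≤ 0)]
    field_simp
    ring
  · rw [abs_of_nonneg (by linarith : 0 ≤ t - 1), abs_of_nonpos (by linarith : t - 3 / 2 ≤ 0)]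
    field_simp
    ring
  · rw [abs_of_nonneg (by linarith : 0 ≤ t - 1), abs_of_nonneg (by linarith : 0 ≤ t - 3 / 2)]
    ring

lemma hasDerivAt_frho (hρ : ρ ≠ 0) (x : ℝ) :
    HasDerivAt (frho ρ) (x + ρ / 2 * kinkSum (fun y => y * |y|) x) x := by
  have cube : HasDerivAt (kinkSum fun y => |y| ^ 3) (3 * kinkSum (fun y => y * |y|) x) x := by
    rw [← kinkSum_const_mul]
    refine hasDerivAt_kinkSum (fun y => (hasDerivAt_abs_pow_add_two 1 y).congr_deriv ?_) x
    norm_num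
  rw [funext (frho_eq_kinkSum hρ)]
  refine ((((hasDerivAt_pow 2 x).const_mul (1 / 2)).add
    (cube.const_mul (ρ / 6))).add_const _).congr_deriv ?_
  push_cast
  ring

lemma hasDerivAt_deriv_frho (hρ : ρ ≠ 0) (x : ℝ) :
    HasDerivAt (deriv (frho ρ)) (1 + ρ * kinkSum abs x) x := by
  have square : HasDerivAt (kinkSum fun y => y * |y|) (2 * kinkSum abs x) x := by
    rw [← kinkSum_const_mul]
    refine hasDerivAt_kinkSum (fun y => ?_) x
    simpa [one_add_one_eq_two] using hasDerivAt_self_mul_abs_pow 1 y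
  rw [funext fun y => (hasDerivAt_frho hρ y).deriv]
  refine ((hasDerivAt_id x).add (square.const_mul (ρ / 2))).congr_deriv ?_
  ring

theorem frho_smooth_general (hρ : ρ ≠ 0) :
    Differentiable ℝ (frho ρ) ∧
      LipschitzWith (Real.toNNReal (1 + |ρ|)) (deriv (frho ρ)) := by
  refine ⟨fun x => (hasDerivAt_frho hρ x).differentiableAt,
    lipschitzWith_of_nnnorm_deriv_le
      (fun x => (hasDerivAt_deriv_frho hρ x).differentiableAt) fun x => ?_⟩
  rw [← NNReal.coe_le_coe, coe_nnnorm, Real.coe_toNNReal _ (by positivity),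
    (hasDerivAt_deriv_frho hρ x).deriv, Real.norm_eq_abs]
  calc |1 + ρ * kinkSum abs x|
    _ ≤ |1| + |ρ * kinkSum abs x| := abs_add_le _ _
    _ = 1 + |ρ| * |kinkSum abs x| := by rw [abs_one, abs_mul]
    _ ≤ 1 + |ρ| := by
      gcongr
      exact mul_le_of_le_one_right (abs_nonneg ρ) (abs_kinkSum_abs_le_one x)

end Frho

/-- For every `ρ ∈ (0, 4]`, `f_ρ` is `(1+ρ)`-smooth:
differentiable with `(1+ρ)`-Lipschitz derivative. -/
theorem frho_smooth (ρ : ℝ) (hρ : ρ ∈ Set.Ioc (0 : ℝ) 4) :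
    Differentiable ℝ (frho ρ) ∧
      LipschitzWith (Real.toNNReal (1 + ρ)) (deriv (frho ρ)) := by
  simpa only [abs_of_pos hρ.1] using frho_smooth_general hρ.1.ne'
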